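/- For every nonzero nonunit x of D, xD is expressible as a *-product of finitely many *-f-homogeneous ideals if and only if D is a GCD domain and a *-IRKT. -/

import Mathlib

open scoped nonZeroDivisors

/-- A star operation on the nonzero fractional ideals of an integral domain `D`
with quotient field `K`: it fixes nonzero principal fractional ideals, commutes with
multiplication by nonzero principal fractional ideals, is extensive, monotone and
idempotent (on nonzero fractional ideals). -/
structure StarOperation (D K : Type*) [CommRing D] [IsDomain D] [Field K]
    [Algebra D K] [IsFractionRing D K] where
  star : FractionalIdeal D⁰ K → FractionalIdeal D⁰ K
  star_spanSingleton : ∀ x : K, x ≠ 0 →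
    star (FractionalIdeal.spanSingleton D⁰ x) = FractionalIdeal.spanSingleton D⁰ x
  star_smul : ∀ (x : K) (I : FractionalIdeal D⁰ K), x ≠ 0 → I ≠ 0 →
    star (FractionalIdeal.spanSingleton D⁰ x * I) = FractionalIdeal.spanSingleton D⁰ x * star I
  le_star : ∀ I : FractionalIdeal D⁰ K, I ≠ 0 → I ≤ star I
  star_mono : ∀ I J : FractionalIdeal D⁰ K, I ≠ 0 → J ≠ 0 → I ≤ J → star I ≤ star J
  star_idem : ∀ I : FractionalIdeal D⁰ K, I ≠ 0 → star (star I) = star I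

namespace StarOperation

variable {D K : Type*} [CommRing D] [IsDomain D] [Field K] [Algebra D K] [IsFractionRing D K]
variable (s : StarOperation D K)

/-- `*` has finite character: for every nonzero fractional ideal `I`, `I^*` is the union
of `J^*` over the nonzero finitely generated fractional subideals `J` of `I`. -/
def FiniteCharacter : Prop :=
  ∀ I : FractionalIdeal D⁰ K, I ≠ 0 → ∀ x ∈ s.star I,
    ∃ J : FractionalIdeal D⁰ K, J ≠ 0 ∧ (J : Submodule D K).FG ∧ J ≤ I ∧ x ∈ s.star J

/-- A (nonzero) integral ideal `I` of `D` is a `*`-ideal if `I^* = I`. -/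
def IsStarIdeal (I : Ideal D) : Prop :=
  I ≠ ⊥ ∧ s.star (I : FractionalIdeal D⁰ K) = (I : FractionalIdeal D⁰ K)

/-- An integral ideal `I` of `D` is a `*`-ideal of finite type if `I = J^*` for some
nonzero finitely generated ideal `J`. -/
def IsFiniteTypeStarIdeal (I : Ideal D) : Prop :=
  ∃ J : Ideal D, J ≠ ⊥ ∧ J.FG ∧
    s.star (J : FractionalIdeal D⁰ K) = (I : FractionalIdeal D⁰ K)

/-- A maximal `*`-ideal: maximal among proper integral `*`-ideals. -/
def IsMaxStarIdeal (M : Ideal D) : Prop :=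
  M ≠ ⊤ ∧ s.IsStarIdeal M ∧ ∀ J : Ideal D, J ≠ ⊤ → s.IsStarIdeal J → M ≤ J → J = M

/-- `I` is `*`-homogeneous: a proper `*`-ideal of finite type such that `(J + J')^* ≠ D`
for every pair `J`, `J'` of proper `*`-ideals of finite type containing `I`. -/
def IsHomog (I : Ideal D) : Prop :=
  I ≠ ⊤ ∧ s.IsStarIdeal I ∧ s.IsFiniteTypeStarIdeal I ∧
    ∀ J J' : Ideal D, J ≠ ⊤ → J' ≠ ⊤ → s.IsStarIdeal J → s.IsStarIdeal J' →
      s.IsFiniteTypeStarIdeal J → s.IsFiniteTypeStarIdeal J' → I ≤ J → I ≤ J' →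
      s.star ((J + J' : Ideal D) : FractionalIdeal D⁰ K) ≠ 1

/-- The set `M(I) = {x ∈ D : (xD + I)^* ≠ D}` attached to an ideal `I`. -/
def MSet (I : Ideal D) : Set D :=
  {x : D | s.star ((Ideal.span {x} + I : Ideal D) : FractionalIdeal D⁰ K) ≠ 1}

/-- `A` and `B` are `*`-comaximal if `(A + B)^* = D`. -/
def StarComaximal (A B : Ideal D) : Prop :=
  s.star ((A + B : Ideal D) : FractionalIdeal D⁰ K) = 1

/-- An integral ideal `I` is `*`-invertible if `(I · I⁻¹)^* = D`. -/
def StarInvertible (I : Ideal D) : Prop :=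
  s.star ((I : FractionalIdeal D⁰ K) * (I : FractionalIdeal D⁰ K)⁻¹) = 1

/-- `D` is a `*`-SH domain: every principal ideal generated by a nonzero nonunit is a
`*`-product of finitely many `*`-homogeneous ideals. -/
def IsSHDomain : Prop :=
  ∀ x : D, x ≠ 0 → ¬IsUnit x →
    ∃ T : Multiset (Ideal D), (∀ J ∈ T, s.IsHomog J) ∧
      s.star ((T.prod : Ideal D) : FractionalIdeal D⁰ K) =
        ((Ideal.span {x} : Ideal D) : FractionalIdeal D⁰ K)

/-- `D` has finite `*`-character: every nonzero nonunit lies in only finitely many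
maximal `*`-ideals. -/
def FiniteStarCharacter : Prop :=
  ∀ x : D, x ≠ 0 → ¬IsUnit x → {P : Ideal D | s.IsMaxStarIdeal P ∧ x ∈ P}.Finite

end StarOperation

namespace StarOperation

variable {D K : Type*} [CommRing D] [IsDomain D] [Field K] [Algebra D K] [IsFractionRing D K]

/-- A `*`-homogeneous ideal `I` is `*`-super homogeneous if every `*`-ideal of finite
type containing `I` is `*`-invertible. -/
def IsSuperHomog (s : StarOperation D K) (I : Ideal D) : Prop :=
  s.IsHomog I ∧ ∀ J : Ideal D, s.IsStarIdeal J → s.IsFiniteTypeStarIdeal J → I ≤ J →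
    s.StarInvertible J

/-- `D` is a `*`-independent ring of Krull type: localizations at maximal `*`-ideals are
valuation domains, `D` is the locally finite intersection of these localizations (inside
`K`), and no two distinct maximal `*`-ideals contain a common nonzero prime ideal. -/
def IsIRKT (s : StarOperation D K) : Prop :=
  (∀ (P : Ideal D) [P.IsPrime], s.IsMaxStarIdeal P →
    ValuationRing (Localization.AtPrime P)) ∧
  (∀ x : K, (∀ P : Ideal D, s.IsMaxStarIdeal P →
      ∃ a t : D, t ∉ P ∧ x * algebraMap D K t = algebraMap D K a) →
    ∃ d : D, algebraMap D K d = x) ∧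
  s.FiniteStarCharacter ∧
  (∀ P Q : Ideal D, s.IsMaxStarIdeal P → s.IsMaxStarIdeal Q → P ≠ Q →
    ∀ L : Ideal D, L.IsPrime → L ≠ ⊥ → ¬(L ≤ P ⊓ Q))

end StarOperation

namespace StarOperation

variable {D K : Type*} [CommRing D] [IsDomain D] [Field K] [Algebra D K] [IsFractionRing D K]

/-- A `*`-homogeneous ideal `I` is `*`-f-homogeneous if every `*`-ideal of finite type
containing `I` is principal. -/
def IsFHomog (s : StarOperation D K) (I : Ideal D) : Prop :=
  s.IsHomog I ∧ ∀ J : Ideal D, s.IsStarIdeal J → s.IsFiniteTypeStarIdeal J → I ≤ J →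
    J.IsPrincipal

end StarOperation

/-!
A `*`-homogeneous ideal lies in exactly one maximal `*`-ideal, and a prime containing `x` contains
a factor of every `*`-factorization of `xD`. Factoring principal ideals into `*`-homogeneous ideals
therefore forces finite `*`-character and independence of the maximal `*`-ideals. If the factors are
`*`-f-homogeneous, extracting greatest common divisors one factor at a time shows that `(aD + bD)^*`
is always principal, which gives gcds in `D` and makes the localizations valuation domains. That `D`
is the intersection of these localizations holds for every `*` of finite character: if `a / b` lies
in all of them, then the conductor `{t | b ∣ a * t}` lies in no maximal `*`-ideal.

Conversely, in a GCD domain whose localizations at maximal `*`-ideals are valuation domains, coprime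
elements generate an ideal with `*`-closure `D`, so again every `(aD + bD)^*` is principal. If `x`
lies in distinct maximal `*`-ideals `P` and `Q`, independence yields `s ∉ P` and `t ∉ Q` with
`x ∣ s * t`, and the GCD property splits `x` accordingly; each factor of `x` lies in fewer maximal
`*`-ideals than `x`, so this process ends with elements lying in only one.
-/

section CommRing

variable {R : Type*} [CommRing R]

theorem exists_fg_fg_le_sup {M : Type*} [AddCommMonoid M] [Module R M]
    {N A B : Submodule R M} (hN : N.FG) (h : N ≤ A ⊔ B) :
    ∃ A' B' : Submodule R M, A'.FG ∧ B'.FG ∧ A' ≤ A ∧ B' ≤ B ∧ N ≤ A' ⊔ B' := by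
  induction N, hN using Submodule.fg_induction with
  | singleton z =>
    rw [Submodule.span_singleton_le_iff_mem] at h
    obtain ⟨a, ha, b, hb, rfl⟩ := Submodule.mem_sup.1 h
    refine ⟨R ∙ a, R ∙ b, Submodule.fg_span_singleton a, Submodule.fg_span_singleton b, ?_, ?_, ?_⟩
    · rwa [Submodule.span_singleton_le_iff_mem]
    · rwa [Submodule.span_singleton_le_iff_mem]
    · rw [Submodule.span_singleton_le_iff_mem]
      exact Submodule.add_mem_sup (Submodule.mem_span_singleton_self a)
        (Submodule.mem_span_singleton_self b)
  | sup N₁ N₂ _ _ ih₁ ih₂ =>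
    obtain ⟨A₁, B₁, hA₁, hB₁, hA₁A, hB₁B, h₁⟩ := ih₁ (le_sup_left.trans h)
    obtain ⟨A₂, B₂, hA₂, hB₂, hA₂A, hB₂B, h₂⟩ := ih₂ (le_sup_right.trans h)
    refine ⟨A₁ ⊔ A₂, B₁ ⊔ B₂, hA₁.sup hA₂, hB₁.sup hB₂, sup_le hA₁A hA₂A, sup_le hB₁B hB₂B, ?_⟩
    rw [sup_sup_sup_comm]
    exact sup_le_sup h₁ h₂

theorem exists_eq_span_singleton_mul_of_le {I : Ideal R} {d : R} (h : I ≤ Ideal.span {d}) :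
    ∃ J : Ideal R, I = Ideal.span {d} * J := by
  refine ⟨Submodule.comap (LinearMap.mulLeft R d) I, le_antisymm (fun x hx => ?_) ?_⟩
  · obtain ⟨y, rfl⟩ := Ideal.mem_span_singleton.1 (h hx)
    exact Ideal.mem_span_singleton_mul.2 ⟨y, hx, rfl⟩
  · exact Ideal.span_singleton_mul_le_iff.2 fun _ hz => hz

/-- The primes inside `P ⊓ Q` are those avoiding every product of an element outside `P` with an
element outside `Q`. -/
theorem exists_eq_mul_notMem_notMem [DecompositionMonoid R] {P Q : Ideal R} [P.IsPrime]
    [Q.IsPrime] {x : R} (h : ∀ L : Ideal R, L.IsPrime → x ∈ L → ¬L ≤ P ⊓ Q) :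
    ∃ a b : R, a ∉ P ∧ b ∉ Q ∧ x = a * b := by
  suffices ∃ s ∉ P, ∃ t ∉ Q, x ∣ s * t by
    obtain ⟨s, hs, t, ht, hxst⟩ := this
    obtain ⟨a, b, has, hbt, rfl⟩ := exists_dvd_and_dvd_of_dvd_mul hxst
    exact ⟨a, b, fun ha => hs (P.mem_of_dvd has ha), fun hb => ht (Q.mem_of_dvd hbt hb), rfl⟩
  by_contra! hx
  have hdisj : Disjoint (Ideal.span {x} : Set R) (P.primeCompl ⊔ Q.primeCompl : Submonoid R) := by
    rw [Set.disjoint_left]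
    intro z hxz hz
    obtain ⟨s, hs, t, ht, rfl⟩ := Submonoid.mem_sup.1 hz
    exact hx s hs t ht (Ideal.mem_span_singleton.1 hxz)
  obtain ⟨L, hL, hxL, hLdisj⟩ := Ideal.exists_le_prime_disjoint _ _ hdisj
  rw [Set.disjoint_left] at hLdisj
  refine h L hL (hxL (Ideal.mem_span_singleton_self x)) (le_inf (fun z hz => ?_) fun z hz => ?_)
  · by_contra hzP
    exact hLdisj hz (Submonoid.mem_sup_left (S := P.primeCompl) hzP)
  · by_contra hzQ
    exact hLdisj hz (Submonoid.mem_sup_right (T := Q.primeCompl) hzQ)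

theorem isGCDMonoid_iff_forall_inf_isPrincipal [IsDomain R] :
    IsGCDMonoid R ↔
      ∀ a b : R, a ≠ 0 → b ≠ 0 → (Ideal.span {a} ⊓ Ideal.span {b}).IsPrincipal := by
  have isPrincipal_iff (a b : R) : (Ideal.span {a} ⊓ Ideal.span {b}).IsPrincipal ↔
      ∃ c, ∀ d, a ∣ d ∧ b ∣ d ↔ c ∣ d := by
    simp only [Submodule.isPrincipal_iff, Ideal.submodule_span_eq, SetLike.ext_iff, Ideal.mem_inf,
      Ideal.mem_span_singleton]
  simp only [isGCDMonoid_iff_exists_lcm, isPrincipal_iff]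
  refine ⟨fun h a b _ _ => h.2 a b, fun h => ⟨inferInstance, fun a b => ?_⟩⟩
  by_cases ha : a = 0
  · exact ⟨0, fun d => ⟨fun hd => ha ▸ hd.1, fun hd => by simp [zero_dvd_iff.1 hd]⟩⟩
  by_cases hb : b = 0
  · exact ⟨0, fun d => ⟨fun hd => hb ▸ hd.2, fun hd => by simp [zero_dvd_iff.1 hd]⟩⟩
  exact h a b ha hb

section Localization

variable (M : Submonoid R) {S : Type*} [CommRing S] [Algebra R S] [IsLocalization M S]

include M in
theorem algebraMap_dvd_algebraMap_iff_exists_dvd_mul {a b : R} :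
    algebraMap R S a ∣ algebraMap R S b ↔ ∃ m ∈ M, a ∣ b * m := by
  constructor
  · rintro ⟨z, hz⟩
    obtain ⟨⟨r, t⟩, hrt⟩ := IsLocalization.surj M z
    have heq : algebraMap R S (b * t) = algebraMap R S (a * r) := by
      rw [map_mul, map_mul, hz, mul_assoc, hrt]
    obtain ⟨m, hm⟩ := (IsLocalization.eq_iff_exists M S).1 heq
    exact ⟨m * t, (m * t).2, m * r, by linear_combination hm⟩
  · rintro ⟨m, hm, h⟩
    have hu : IsUnit (algebraMap R S m) := IsLocalization.map_units S (⟨m, hm⟩ : M)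
    rw [← hu.dvd_mul_right, ← map_mul]
    exact map_dvd _ h

include M in
theorem preValuationRing_iff_forall_exists_dvd_mul :
    PreValuationRing S ↔ ∀ a b : R, ∃ m ∈ M, a ∣ b * m ∨ b ∣ a * m := by
  have associated_algebraMap (x : S) : ∃ a : R, Associated x (algebraMap R S a) := by
    obtain ⟨⟨a, t⟩, hat⟩ := IsLocalization.surj M x
    exact ⟨a, (IsLocalization.map_units S t).unit, hat⟩
  simp only [and_or_left, exists_or, ← algebraMap_dvd_algebraMap_iff_exists_dvd_mul (S := S) M]
  rw [PreValuationRing.iff_dvd_total]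
  refine ⟨fun h a b => h.total _ _, fun h => ⟨fun x y => ?_⟩⟩
  obtain ⟨a, ha⟩ := associated_algebraMap x
  obtain ⟨b, hb⟩ := associated_algebraMap y
  simpa only [ha.dvd_iff_dvd_left, hb.dvd_iff_dvd_right, hb.dvd_iff_dvd_left,
    ha.dvd_iff_dvd_right] using h a b

end Localization

theorem valuationRing_atPrime_iff_forall_exists_dvd_mul [IsDomain R] (P : Ideal R) [P.IsPrime] :
    ValuationRing (Localization.AtPrime P) ↔
      ∀ a b : R, ∃ t ∉ P, a ∣ b * t ∨ b ∣ a * t :=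
  ⟨fun _ => (preValuationRing_iff_forall_exists_dvd_mul (S := Localization.AtPrime P)
      P.primeCompl).1 inferInstance,
    fun h => { (preValuationRing_iff_forall_exists_dvd_mul P.primeCompl).2 h with }⟩

end CommRing

namespace StarOperation

variable {D K : Type*} [CommRing D] [IsDomain D] [Field K] [Algebra D K] [IsFractionRing D K]
variable {s : StarOperation D K} {I J P Q : Ideal D}

theorem star_one : s.star 1 = 1 := by
  simpa only [FractionalIdeal.spanSingleton_one] using s.star_spanSingleton 1 one_ne_zero

theorem star_coeIdeal_le_one (hI : I ≠ ⊥) : s.star (I : FractionalIdeal D⁰ K) ≤ 1 :=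
  star_one (s := s) ▸ s.star_mono _ _ (FractionalIdeal.coeIdeal_ne_zero.2 hI) one_ne_zero
    FractionalIdeal.coeIdeal_le_one

variable (s) in
open Classical in
/-- The ideal `I^*` of `D`. The case `I = ⊥` is split off because `s.star 0` is unconstrained. -/
noncomputable def starIdeal (I : Ideal D) : Ideal D :=
  if I = ⊥ then ⊥ else
    (s.star (I : FractionalIdeal D⁰ K) : Submodule D K).comap (Algebra.linearMap D K)

theorem starIdeal_bot : s.starIdeal ⊥ = ⊥ := if_pos rfl

theorem coe_starIdeal (hI : I ≠ ⊥) :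
    (s.starIdeal I : FractionalIdeal D⁰ K) = s.star (I : FractionalIdeal D⁰ K) := by
  ext x
  rw [FractionalIdeal.mem_coeIdeal, starIdeal, if_neg hI]
  refine ⟨fun ⟨_, hy, hyx⟩ => hyx ▸ hy, fun hx => ?_⟩
  obtain ⟨y, rfl⟩ := (FractionalIdeal.mem_one_iff D⁰).1 (star_coeIdeal_le_one hI hx)
  exact ⟨y, hx, rfl⟩

theorem le_starIdeal (I : Ideal D) : I ≤ s.starIdeal I := by
  rcases eq_or_ne I ⊥ with rfl | hI
  · exact bot_le
  rw [← FractionalIdeal.coeIdeal_le_coeIdeal K, coe_starIdeal hI]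
  exact s.le_star _ (FractionalIdeal.coeIdeal_ne_zero.2 hI)

theorem starIdeal_le_starIdeal_of_le_starIdeal (h : I ≤ s.starIdeal J) :
    s.starIdeal I ≤ s.starIdeal J := by
  rcases eq_or_ne I ⊥ with rfl | hI
  · exact starIdeal_bot.le.trans bot_le
  have hJ : J ≠ ⊥ := by
    rintro rfl
    exact hI (le_bot_iff.1 (h.trans starIdeal_bot.le))
  have hJ' := FractionalIdeal.coeIdeal_ne_zero (K := K).2 hJ
  rw [← FractionalIdeal.coeIdeal_le_coeIdeal K, coe_starIdeal hJ] at h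
  rw [← FractionalIdeal.coeIdeal_le_coeIdeal K, coe_starIdeal hI, coe_starIdeal hJ,
    ← s.star_idem _ hJ']
  exact s.star_mono _ _ (FractionalIdeal.coeIdeal_ne_zero.2 hI)
    (ne_bot_of_le_ne_bot hJ' (s.le_star _ hJ')) h

variable (s) in
/-- The star operation restricted to the integral ideals of `D` and extended by `⊥ ↦ ⊥`, as a
closure operator; its closed ideals are `⊥` and the `*`-ideals. -/
noncomputable def closure : ClosureOperator (Ideal D) :=
  .mk₂ s.starIdeal le_starIdeal fun _ _ => starIdeal_le_starIdeal_of_le_starIdeal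

theorem closure_bot : s.closure ⊥ = ⊥ := starIdeal_bot

theorem closure_ne_bot (hI : I ≠ ⊥) : s.closure I ≠ ⊥ :=
  ne_bot_of_le_ne_bot hI (s.closure.le_closure I)

theorem coe_closure (hI : I ≠ ⊥) :
    (s.closure I : FractionalIdeal D⁰ K) = s.star (I : FractionalIdeal D⁰ K) :=
  coe_starIdeal hI

theorem star_coeIdeal_eq_coeIdeal_iff (hI : I ≠ ⊥) :
    s.star (I : FractionalIdeal D⁰ K) = (J : FractionalIdeal D⁰ K) ↔ s.closure I = J := by
  rw [← coe_closure hI, FractionalIdeal.coeIdeal_inj]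

theorem star_coeIdeal_eq_one_iff (hI : I ≠ ⊥) :
    s.star (I : FractionalIdeal D⁰ K) = 1 ↔ s.closure I = ⊤ := by
  rw [← FractionalIdeal.coeIdeal_top, star_coeIdeal_eq_coeIdeal_iff hI]

theorem closure_span_singleton_mul (x : D) (I : Ideal D) :
    s.closure (Ideal.span {x} * I) = Ideal.span {x} * s.closure I := by
  rcases eq_or_ne x 0 with rfl | hx
  · simp [closure_bot]
  rcases eq_or_ne I ⊥ with rfl | hI
  · simp [closure_bot]
  have hxI : Ideal.span {x} * I ≠ ⊥ :=
    mul_ne_zero (mt Ideal.span_singleton_eq_bot.1 hx) hI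
  rw [← star_coeIdeal_eq_coeIdeal_iff hxI, FractionalIdeal.coeIdeal_mul,
    FractionalIdeal.coeIdeal_mul, coe_closure hI, FractionalIdeal.coeIdeal_span_singleton]
  exact s.star_smul _ _ (by simpa using hx) (FractionalIdeal.coeIdeal_ne_zero.2 hI)

theorem isClosed_span_singleton (x : D) : s.closure.IsClosed (Ideal.span {x}) := by
  rw [s.closure.isClosed_iff_closure_le]
  simpa only [s.closure.closure_top, Ideal.mul_top] using
    (closure_span_singleton_mul (s := s) x ⊤).le

theorem isStarIdeal_iff : s.IsStarIdeal I ↔ I ≠ ⊥ ∧ s.closure.IsClosed I :=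
  and_congr_right fun hI => (star_coeIdeal_eq_coeIdeal_iff hI).trans s.closure.isClosed_iff.symm

theorem isFiniteTypeStarIdeal_iff :
    s.IsFiniteTypeStarIdeal I ↔ ∃ J : Ideal D, J ≠ ⊥ ∧ J.FG ∧ s.closure J = I :=
  exists_congr fun _ => and_congr_right fun hJ =>
    and_congr_right fun _ => star_coeIdeal_eq_coeIdeal_iff hJ

theorem isFiniteTypeStarIdeal_closure (hI : I ≠ ⊥) (hfg : I.FG) :
    s.IsFiniteTypeStarIdeal (s.closure I) :=
  isFiniteTypeStarIdeal_iff.2 ⟨I, hI, hfg, rfl⟩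

theorem isFiniteTypeStarIdeal_span_singleton {x : D} (hx : x ≠ 0) :
    s.IsFiniteTypeStarIdeal (Ideal.span {x}) :=
  (isClosed_span_singleton (s := s) x).closure_eq ▸ isFiniteTypeStarIdeal_closure
    (mt Ideal.span_singleton_eq_bot.1 hx) (Submodule.fg_span_singleton x)

theorem IsFiniteTypeStarIdeal.isStarIdeal (hI : s.IsFiniteTypeStarIdeal I) : s.IsStarIdeal I := by
  obtain ⟨J, hJ, -, rfl⟩ := isFiniteTypeStarIdeal_iff.1 hI
  exact isStarIdeal_iff.2 ⟨closure_ne_bot hJ, s.closure.isClosed_closure J⟩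

theorem FiniteCharacter.exists_fg_le_mem_closure (hs : s.FiniteCharacter) {x : D}
    (hx : x ∈ s.closure I) : ∃ J : Ideal D, J.FG ∧ J ≤ I ∧ x ∈ s.closure J := by
  rcases eq_or_ne I ⊥ with rfl | hI
  · exact ⟨⊥, Submodule.fg_bot, le_rfl, hx⟩
  have algebraMap_mem_star {J : Ideal D} (hJ : J ≠ ⊥) :
      algebraMap D K x ∈ s.star (J : FractionalIdeal D⁰ K) ↔ x ∈ s.closure J := by
    rw [← coe_closure hJ, FractionalIdeal.mem_coeIdeal]
    simp
  obtain ⟨J', hJ', hfg, hJI, hxJ⟩ :=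
    hs _ (FractionalIdeal.coeIdeal_ne_zero.2 hI) _ ((algebraMap_mem_star hI).2 hx)
  obtain ⟨J, rfl⟩ := FractionalIdeal.le_one_iff_exists_coeIdeal.1
    (hJI.trans FractionalIdeal.coeIdeal_le_one)
  exact ⟨J, (FractionalIdeal.coeIdeal_fg D⁰ (IsFractionRing.injective D K) J).1 hfg,
    (FractionalIdeal.coeIdeal_le_coeIdeal K).1 hJI,
    (algebraMap_mem_star (FractionalIdeal.coeIdeal_ne_zero.1 hJ')).1 hxJ⟩

theorem mem_of_closure_eq_top_of_span_singleton_mul_le (hI : s.closure I = ⊤)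
    (hJ : s.closure.IsClosed J) {x : D} (h : Ideal.span {x} * I ≤ J) : x ∈ J := by
  rw [← hJ.closure_le_iff, closure_span_singleton_mul, hI, Ideal.mul_top] at h
  exact h (Ideal.mem_span_singleton_self x)

theorem FiniteCharacter.isClosed_sSup (hs : s.FiniteCharacter) {C : Set (Ideal D)}
    (hne : C.Nonempty) (hdir : DirectedOn (· ≤ ·) C) (hC : ∀ J ∈ C, s.closure.IsClosed J) :
    s.closure.IsClosed (sSup C) := by
  rw [s.closure.isClosed_iff_closure_le]
  intro x hx
  obtain ⟨N, hN, hNC, hxN⟩ := hs.exists_fg_le_mem_closure hx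
  obtain ⟨J, hJ, hNJ⟩ := (CompleteLattice.isCompactElement_iff_le_of_directed_sSup_le _ N).1
    ((Submodule.fg_iff_compact N).1 hN) C hne hdir hNC
  exact le_sSup hJ (s.closure.closure_min hNJ (hC J hJ) hxN)

theorem IsMaxStarIdeal.isClosed (hP : s.IsMaxStarIdeal P) : s.closure.IsClosed P :=
  (isStarIdeal_iff.1 hP.2.1).2

theorem IsMaxStarIdeal.eq_of_le (hP : s.IsMaxStarIdeal P) (hQ : s.IsMaxStarIdeal Q)
    (h : P ≤ Q) : P = Q :=
  (hP.2.2 Q hQ.1 hQ.2.1 h).symm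

theorem IsMaxStarIdeal.closure_ne_top (hP : s.IsMaxStarIdeal P) (h : I ≤ P) :
    s.closure I ≠ ⊤ :=
  ne_top_of_le_ne_top hP.1 (s.closure.closure_min h hP.isClosed)

theorem IsMaxStarIdeal.closure_sup_eq_top (hP : s.IsMaxStarIdeal P) (hI : ¬I ≤ P) :
    s.closure (P ⊔ I) = ⊤ := by
  by_contra hne
  have hle := s.closure.le_closure (P ⊔ I)
  have hstar : s.IsStarIdeal (s.closure (P ⊔ I)) := isStarIdeal_iff.2
    ⟨closure_ne_bot (ne_bot_of_le_ne_bot hP.2.1.1 le_sup_left), s.closure.isClosed_closure _⟩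
  rw [hP.2.2 _ hne hstar (le_sup_left.trans hle)] at hle
  exact hI (le_sup_right.trans hle)

theorem IsMaxStarIdeal.isPrime (hP : s.IsMaxStarIdeal P) : P.IsPrime where
  ne_top' := hP.1
  mem_or_mem' {a b} hab := by
    refine or_iff_not_imp_left.2 fun ha => ?_
    rw [← Ideal.span_singleton_le_iff_mem] at ha
    refine mem_of_closure_eq_top_of_span_singleton_mul_le (hP.closure_sup_eq_top ha) hP.isClosed ?_
    rw [Ideal.mul_sup, Ideal.span_singleton_mul_span_singleton, mul_comm b]
    exact sup_le Ideal.mul_le_right (P.span_singleton_le_iff_mem.2 hab)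

theorem FiniteCharacter.exists_isMaxStarIdeal_ge (hs : s.FiniteCharacter) (hI : I ≠ ⊥)
    (htop : s.closure I ≠ ⊤) : ∃ P : Ideal D, s.IsMaxStarIdeal P ∧ I ≤ P := by
  let S : Set (Ideal D) := {J | J ≠ ⊤ ∧ s.closure.IsClosed J}
  have sSup_mem (C : Set (Ideal D)) (hCS : C ⊆ S) (hC : IsChain (· ≤ ·) C) (hne : C.Nonempty) :
      sSup C ∈ S := by
    refine ⟨?_, hs.isClosed_sSup hne hC.directedOn fun J hJ => (hCS hJ).2⟩
    rw [Ideal.ne_top_iff_one, Submodule.mem_sSup_of_directed hne hC.directedOn]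
    rintro ⟨J, hJ, h1⟩
    exact (Ideal.ne_top_iff_one J).1 (hCS hJ).1 h1
  obtain ⟨P, hcIP, hP⟩ := zorn_le_nonempty₀ S
    (fun C hCS hC J hJ => ⟨sSup C, sSup_mem C hCS hC ⟨J, hJ⟩, fun _ => le_sSup⟩) (s.closure I)
    ⟨htop, s.closure.isClosed_closure I⟩
  have hIP := (s.closure.le_closure I).trans hcIP
  refine ⟨P, ⟨hP.prop.1, isStarIdeal_iff.2 ⟨ne_bot_of_le_ne_bot hI hIP, hP.prop.2⟩, ?_⟩, hIP⟩
  exact fun J hJ hJstar hPJ => (hP.eq_of_le ⟨hJ, (isStarIdeal_iff.1 hJstar).2⟩ hPJ).symm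

theorem FiniteCharacter.exists_isMaxStarIdeal_mem (hs : s.FiniteCharacter) {x : D} (hx : x ≠ 0)
    (hu : ¬IsUnit x) : ∃ P : Ideal D, s.IsMaxStarIdeal P ∧ x ∈ P := by
  simp only [← Ideal.span_singleton_le_iff_mem]
  refine hs.exists_isMaxStarIdeal_ge (mt Ideal.span_singleton_eq_bot.1 hx) ?_
  rwa [(isClosed_span_singleton x).closure_eq, Ne, Ideal.span_singleton_eq_top]

theorem FiniteCharacter.exists_algebraMap_eq (hs : s.FiniteCharacter) {x : K}
    (hx : ∀ P : Ideal D, s.IsMaxStarIdeal P →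
      ∃ a t : D, t ∉ P ∧ x * algebraMap D K t = algebraMap D K a) :
    ∃ d : D, algebraMap D K d = x := by
  obtain ⟨a, b, hb, rfl⟩ := IsFractionRing.div_surjective (A := D) x
  have hb0 : b ≠ 0 := nonZeroDivisors.ne_zero hb
  have hbK : algebraMap D K b ≠ 0 := by simpa using hb0
  let I : Ideal D := Submodule.comap (LinearMap.mulLeft D a) (Ideal.span {b})
  have mem_I {t : D} : t ∈ I ↔ b ∣ a * t := Ideal.mem_span_singleton
  suffices htop : s.closure I = ⊤ by
    obtain ⟨d, rfl⟩ := Ideal.mem_span_singleton.1 <|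
      mem_of_closure_eq_top_of_span_singleton_mul_le htop (isClosed_span_singleton b)
        (Ideal.span_singleton_mul_le_iff.2 fun t ht => ht)
    exact ⟨d, by rw [map_mul, mul_div_cancel_left₀ _ hbK]⟩
  by_contra htop
  have hI : I ≠ ⊥ := (Submodule.ne_bot_iff I).2 ⟨b, mem_I.2 (dvd_mul_left b a), hb0⟩
  obtain ⟨P, hP, hIP⟩ := hs.exists_isMaxStarIdeal_ge hI htop
  obtain ⟨r, t, ht, hrt⟩ := hx P hP
  refine ht (hIP (mem_I.2 ⟨r, IsFractionRing.injective D K ?_⟩))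
  rw [map_mul, map_mul, ← hrt]
  field_simp

theorem IsFiniteTypeStarIdeal.exists_sup_le (hI : s.IsFiniteTypeStarIdeal I) {A : Ideal D}
    (hA : A.FG) (hP : s.closure.IsClosed P) (hIP : I ≤ P) (hAP : A ≤ P) :
    ∃ J : Ideal D, s.IsFiniteTypeStarIdeal J ∧ I ⊔ A ≤ J ∧ J ≤ P := by
  obtain ⟨I₀, hI₀, hfg, rfl⟩ := isFiniteTypeStarIdeal_iff.1 hI
  refine ⟨s.closure (I₀ ⊔ A), isFiniteTypeStarIdeal_closure (ne_bot_of_le_ne_bot hI₀ le_sup_left)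
    (Submodule.FG.sup hfg hA), ?_, s.closure.closure_min ?_ hP⟩
  · rw [← s.closure.closure_sup_closure_left]
    exact s.closure.le_closure _
  · exact sup_le ((s.closure.le_closure I₀).trans hIP) hAP

theorem IsHomog.eq_of_le (hs : s.FiniteCharacter) (hI : s.IsHomog I) (hP : s.IsMaxStarIdeal P)
    (hQ : s.IsMaxStarIdeal Q) (hIP : I ≤ P) (hIQ : I ≤ Q) : P = Q := by
  obtain ⟨-, -, hft, hhom⟩ := hI
  by_contra hne
  have htop : s.closure (P ⊔ Q) = ⊤ :=
    hP.closure_sup_eq_top fun h => hne (hQ.eq_of_le hP h).symm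
  obtain ⟨N, hN, hNPQ, h1⟩ := hs.exists_fg_le_mem_closure ((Ideal.eq_top_iff_one _).1 htop)
  obtain ⟨A, B, hA, hB, hAP, hBQ, hNAB⟩ := exists_fg_fg_le_sup hN hNPQ
  obtain ⟨J, hJ, hIAJ, hJP⟩ := hft.exists_sup_le hA hP.isClosed hIP hAP
  obtain ⟨J', hJ', hIBJ', hJQ⟩ := hft.exists_sup_le hB hQ.isClosed hIQ hBQ
  rw [sup_le_iff] at hIAJ hIBJ'
  refine hhom J J' (ne_top_of_le_ne_top hP.1 hJP) (ne_top_of_le_ne_top hQ.1 hJQ) hJ.isStarIdeal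
    hJ'.isStarIdeal hJ hJ' hIAJ.1 hIBJ'.1 ?_
  rw [Submodule.add_eq_sup,
    star_coeIdeal_eq_one_iff (ne_bot_of_le_ne_bot hJ.isStarIdeal.1 le_sup_left),
    Ideal.eq_top_iff_one]
  exact s.closure.monotone (hNAB.trans (sup_le_sup hIAJ.2 hIBJ'.2)) h1

theorem FiniteCharacter.isHomog_iff (hs : s.FiniteCharacter) :
    s.IsHomog I ↔ s.IsFiniteTypeStarIdeal I ∧ ∃! P : Ideal D, s.IsMaxStarIdeal P ∧ I ≤ P := by
  have exists_max {J : Ideal D} (hJ : s.IsStarIdeal J) (htop : J ≠ ⊤) :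
      ∃ P : Ideal D, s.IsMaxStarIdeal P ∧ J ≤ P :=
    hs.exists_isMaxStarIdeal_ge hJ.1 <| (isStarIdeal_iff.1 hJ).2.closure_eq.trans_ne htop
  constructor
  · intro hI
    obtain ⟨P, hP, hIP⟩ := exists_max hI.2.1 hI.1
    exact ⟨hI.2.2.1, P, ⟨hP, hIP⟩, fun Q hQ => hI.eq_of_le hs hQ.1 hP hQ.2 hIP⟩
  · rintro ⟨hI, P, ⟨hP, hIP⟩, huniq⟩
    refine ⟨ne_top_of_le_ne_top hP.1 hIP, hI.isStarIdeal, hI, ?_⟩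
    intro J J' hJtop hJ'top hJ hJ' _ _ hIJ hIJ'
    have le_P {J : Ideal D} (hJ : s.IsStarIdeal J) (htop : J ≠ ⊤) (hIJ : I ≤ J) : J ≤ P := by
      obtain ⟨Q, hQ, hJQ⟩ := exists_max hJ htop
      exact huniq Q ⟨hQ, hIJ.trans hJQ⟩ ▸ hJQ
    rw [Ne, Submodule.add_eq_sup,
      star_coeIdeal_eq_one_iff (ne_bot_of_le_ne_bot hJ.1 le_sup_left)]
    exact hP.closure_ne_top (sup_le (le_P hJ hJtop hIJ) (le_P hJ' hJ'top hIJ'))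

theorem IsHomog.ne_bot (hI : s.IsHomog I) : I ≠ ⊥ := hI.2.1.1

theorem multiset_prod_ne_bot_of_isHomog {T : Multiset (Ideal D)} (hT : ∀ J ∈ T, s.IsHomog J) :
    T.prod ≠ ⊥ :=
  Multiset.prod_ne_zero fun h => (hT _ h).ne_bot rfl

theorem IsSHDomain.exists_closure_prod_eq (h : s.IsSHDomain) {x : D} (hx : x ≠ 0)
    (hu : ¬IsUnit x) : ∃ T : Multiset (Ideal D), (∀ J ∈ T, s.IsHomog J) ∧
      s.closure T.prod = Ideal.span {x} := by
  obtain ⟨T, hT, hTx⟩ := h x hx hu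
  exact ⟨T, hT, (star_coeIdeal_eq_coeIdeal_iff (multiset_prod_ne_bot_of_isHomog hT)).1 hTx⟩

theorem IsSHDomain.exists_multiset_forall_isPrime (h : s.IsSHDomain) {x : D} (hx : x ≠ 0)
    (hu : ¬IsUnit x) : ∃ T : Multiset (Ideal D), (∀ J ∈ T, s.IsHomog J) ∧
      ∀ L : Ideal D, L.IsPrime → x ∈ L → ∃ J ∈ T, J ≤ L := by
  obtain ⟨T, hT, hTx⟩ := h.exists_closure_prod_eq hx hu
  refine ⟨T, hT, fun L hL hxL => hL.multiset_prod_le.1 ?_⟩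
  calc T.prod ≤ s.closure T.prod := s.closure.le_closure _
    _ = Ideal.span {x} := hTx
    _ ≤ L := L.span_singleton_le_iff_mem.2 hxL

theorem IsSHDomain.finiteStarCharacter (h : s.IsSHDomain) (hs : s.FiniteCharacter) :
    s.FiniteStarCharacter := by
  intro x hx hu
  obtain ⟨T, hT, hTL⟩ := h.exists_multiset_forall_isPrime hx hu
  have hfin : (⋃ J ∈ {J | J ∈ T}, {P : Ideal D | s.IsMaxStarIdeal P ∧ J ≤ P}).Finite :=
    T.finite_toSet.biUnion fun J hJ => Set.Subsingleton.finite fun P hP Q hQ =>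
      (hT J hJ).eq_of_le hs hP.1 hQ.1 hP.2 hQ.2
  refine hfin.subset fun P ⟨hP, hxP⟩ => ?_
  obtain ⟨J, hJ, hJP⟩ := hTL P hP.isPrime hxP
  exact Set.mem_biUnion hJ ⟨hP, hJP⟩

variable (s) in
/-- Independence of the maximal `*`-ideals: no nonzero prime ideal lies in two of them. -/
def StarIndependent : Prop :=
  ∀ P Q : Ideal D, s.IsMaxStarIdeal P → s.IsMaxStarIdeal Q → P ≠ Q →
    ∀ L : Ideal D, L.IsPrime → L ≠ ⊥ → ¬(L ≤ P ⊓ Q)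

theorem IsSHDomain.starIndependent (h : s.IsSHDomain) (hs : s.FiniteCharacter) :
    s.StarIndependent := by
  intro P Q hP hQ hne L hL hLbot hLPQ
  obtain ⟨x, hxL, hx⟩ := Submodule.exists_mem_ne_zero_of_ne_bot hLbot
  have hu : ¬IsUnit x := fun hu => hL.ne_top (L.eq_top_of_isUnit_mem hxL hu)
  obtain ⟨T, hT, hTL⟩ := h.exists_multiset_forall_isPrime hx hu
  obtain ⟨J, hJ, hJL⟩ := hTL L hL hxL
  rw [le_inf_iff] at hLPQ
  exact hne ((hT J hJ).eq_of_le hs hP hQ (hJL.trans hLPQ.1) (hJL.trans hLPQ.2))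

variable (s) in
/-- `*`-Bezout domains: `I^*` is principal for every finitely generated ideal `I`. -/
def IsStarBezout : Prop :=
  ∀ I : Ideal D, I.FG → (s.closure I).IsPrincipal

theorem isStarBezout_iff_closure_span_sup_span :
    s.IsStarBezout ↔
      ∀ a b : D, (s.closure (Ideal.span {a} ⊔ Ideal.span {b})).IsPrincipal := by
  constructor
  · exact fun h a b =>
      h _ (Submodule.FG.sup (Submodule.fg_span_singleton a) (Submodule.fg_span_singleton b))
  intro h I hI
  induction I, hI using Submodule.fg_induction with
  | singleton x => exact (isClosed_span_singleton (s := s) x).closure_eq ▸ ⟨x, rfl⟩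
  | sup I J _ _ ihI ihJ =>
    obtain ⟨a, ha⟩ := ihI
    obtain ⟨b, hb⟩ := ihJ
    rw [← s.closure.closure_sup_closure, ha, hb]
    exact h a b

theorem exists_closure_sup_eq_top_of_isPrincipal {b : D}
    (h : (s.closure (I ⊔ Ideal.span {b})).IsPrincipal) :
    ∃ (d : D) (J : Ideal D) (c : D), I = Ideal.span {d} * J ∧ b = d * c ∧
      s.closure (J ⊔ Ideal.span {c}) = ⊤ := by
  obtain ⟨d, hd⟩ := h
  rw [Ideal.submodule_span_eq] at hd
  obtain ⟨hId, hbd⟩ := sup_le_iff.1 (hd ▸ s.closure.le_closure (I ⊔ Ideal.span {b}))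
  obtain ⟨J, rfl⟩ := exists_eq_span_singleton_mul_of_le hId
  obtain ⟨c, rfl⟩ := Ideal.span_singleton_le_span_singleton.1 hbd
  rcases eq_or_ne d 0 with rfl | hd0
  · exact ⟨0, ⊤, 0, by simp, by simp, by simp⟩
  refine ⟨d, J, c, rfl, rfl, (Ideal.span_singleton_mul_right_inj hd0).1 ?_⟩
  rw [← closure_span_singleton_mul, Ideal.mul_sup, Ideal.span_singleton_mul_span_singleton, hd,
    Ideal.mul_top]

theorem closure_mul_sup_of_closure_sup_eq_top (h : s.closure (I ⊔ J) = ⊤) (A : Ideal D) :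
    s.closure (I * A ⊔ J) = s.closure (A ⊔ J) := by
  refine le_antisymm (s.closure.monotone (sup_le_sup_right Ideal.mul_le_right J)) ?_
  refine s.closure.closure_min (sup_le (fun x hx => ?_) (le_sup_right.trans
    (s.closure.le_closure _))) (s.closure.isClosed_closure _)
  refine mem_of_closure_eq_top_of_span_singleton_mul_le h (s.closure.isClosed_closure _) ?_
  refine le_trans ?_ (s.closure.le_closure _)
  rw [Ideal.mul_sup, mul_comm]
  exact sup_le_sup (Ideal.mul_mono_right (A.span_singleton_le_iff_mem.2 hx)) Ideal.mul_le_right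

theorem isPrincipal_closure_mul_sup_span_singleton
    (hI : ∀ b : D, (s.closure (I ⊔ Ideal.span {b})).IsPrincipal)
    (hJ : ∀ b : D, (s.closure (J ⊔ Ideal.span {b})).IsPrincipal) (b : D) :
    (s.closure (I * J ⊔ Ideal.span {b})).IsPrincipal := by
  obtain ⟨d, I', c, rfl, rfl, htop⟩ := exists_closure_sup_eq_top_of_isPrincipal (hI b)
  obtain ⟨e, he⟩ := hJ c
  refine ⟨d * e, ?_⟩
  calc s.closure (Ideal.span {d} * I' * J ⊔ Ideal.span {d * c})
      = Ideal.span {d} * s.closure (I' * J ⊔ Ideal.span {c}) := by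
        rw [← closure_span_singleton_mul, Ideal.mul_sup, mul_assoc,
          Ideal.span_singleton_mul_span_singleton]
    _ = Ideal.span {d} * s.closure (J ⊔ Ideal.span {c}) := by
        rw [closure_mul_sup_of_closure_sup_eq_top htop]
    _ = Ideal.span {d * e} := by
        rw [he, Ideal.submodule_span_eq, Ideal.span_singleton_mul_span_singleton]

theorem IsFHomog.isPrincipal_closure_sup_span_singleton (hI : s.IsFHomog I) (b : D) :
    (s.closure (I ⊔ Ideal.span {b})).IsPrincipal := by
  obtain ⟨⟨-, -, hft, -⟩, hprin⟩ := hI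
  obtain ⟨I₀, hI₀, hfg, rfl⟩ := isFiniteTypeStarIdeal_iff.1 hft
  rw [s.closure.closure_sup_closure_left]
  have hJ : s.IsFiniteTypeStarIdeal (s.closure (I₀ ⊔ Ideal.span {b})) :=
    isFiniteTypeStarIdeal_closure (ne_bot_of_le_ne_bot hI₀ le_sup_left)
      (Submodule.FG.sup hfg (Submodule.fg_span_singleton b))
  exact hprin _ hJ.isStarIdeal hJ (s.closure.monotone le_sup_left)

variable (s) in
/-- `*`-f-SH domains: every principal ideal generated by a nonzero nonunit is a `*`-product of
finitely many `*`-f-homogeneous ideals. -/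
def IsFSHDomain : Prop :=
  ∀ x : D, x ≠ 0 → ¬IsUnit x →
    ∃ T : Multiset (Ideal D), (∀ J ∈ T, s.IsFHomog J) ∧
      s.star ((T.prod : Ideal D) : FractionalIdeal D⁰ K) =
        ((Ideal.span {x} : Ideal D) : FractionalIdeal D⁰ K)

theorem IsFSHDomain.isSHDomain (h : s.IsFSHDomain) : s.IsSHDomain := fun x hx hu =>
  let ⟨T, hT, hTx⟩ := h x hx hu
  ⟨T, fun J hJ => (hT J hJ).1, hTx⟩

theorem IsFSHDomain.isStarBezout (h : s.IsFSHDomain) : s.IsStarBezout := by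
  rw [isStarBezout_iff_closure_span_sup_span]
  intro a b
  rcases eq_or_ne a 0 with rfl | ha
  · rw [Ideal.span_singleton_zero, bot_sup_eq, (isClosed_span_singleton b).closure_eq]
    exact ⟨b, rfl⟩
  by_cases hu : IsUnit a
  · rw [Ideal.span_singleton_eq_top.2 hu, top_sup_eq, s.closure.closure_top]
    infer_instance
  obtain ⟨T, hT, hTa⟩ := h a ha hu
  rw [star_coeIdeal_eq_coeIdeal_iff
    (multiset_prod_ne_bot_of_isHomog fun J hJ => (hT J hJ).1)] at hTa
  rw [← hTa, s.closure.closure_sup_closure_left]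
  refine Multiset.prod_induction
    (fun I : Ideal D => ∀ b : D, (s.closure (I ⊔ Ideal.span {b})).IsPrincipal) T
    (fun I J => isPrincipal_closure_mul_sup_span_singleton) (fun b => ?_)
    (fun I hI => (hT I hI).isPrincipal_closure_sup_span_singleton) b
  rw [Ideal.one_eq_top, top_sup_eq, s.closure.closure_top]
  infer_instance

theorem IsStarBezout.isGCDMonoid (h : s.IsStarBezout) : IsGCDMonoid D := by
  refine isGCDMonoid_iff_exists_gcd.2 ⟨inferInstance, fun a b => ?_⟩
  obtain ⟨c, hc⟩ := isStarBezout_iff_closure_span_sup_span.1 h a b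
  refine ⟨c, fun d => ?_⟩
  rw [Ideal.submodule_span_eq] at hc
  rw [← Ideal.span_singleton_le_span_singleton (x := c), ← hc,
    (isClosed_span_singleton d).closure_le_iff, sup_le_iff,
    Ideal.span_singleton_le_span_singleton, Ideal.span_singleton_le_span_singleton]

theorem IsStarBezout.valuationRing_atPrime (h : s.IsStarBezout) [P.IsPrime]
    (hP : s.IsMaxStarIdeal P) : ValuationRing (Localization.AtPrime P) := by
  rw [valuationRing_atPrime_iff_forall_exists_dvd_mul]
  intro a b
  obtain ⟨d, J, c, ha, rfl, htop⟩ := exists_closure_sup_eq_top_of_isPrincipal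
    (isStarBezout_iff_closure_span_sup_span.1 h a b)
  by_cases hc : c ∈ P
  · obtain ⟨t, htJ, htP⟩ := Set.not_subset.1 fun hJ : J ≤ P =>
      hP.closure_ne_top (sup_le hJ (P.span_singleton_le_iff_mem.2 hc)) htop
    have had : a ∣ d * t := Ideal.mem_span_singleton.1
      (ha ▸ Ideal.mul_mem_mul (Ideal.mem_span_singleton_self d) htJ)
    exact ⟨t, htP, Or.inl (mul_right_comm d c t ▸ had.mul_right c)⟩
  · have hda : d ∣ a := Ideal.mem_span_singleton.1
      (Ideal.mul_le_left (ha ▸ Ideal.mem_span_singleton_self a))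
    exact ⟨c, hc, Or.inr (mul_dvd_mul_right hda c)⟩

theorem closure_sup_eq_top_of_isRelPrime [DecompositionMonoid D] (hs : s.FiniteCharacter)
    (hV : ∀ (P : Ideal D) [P.IsPrime], s.IsMaxStarIdeal P →
      ValuationRing (Localization.AtPrime P))
    {a b : D} (hab : IsRelPrime a b) : s.closure (Ideal.span {a} ⊔ Ideal.span {b}) = ⊤ := by
  by_contra htop
  have hne : Ideal.span {a} ⊔ Ideal.span {b} ≠ ⊥ := fun h => by
    rw [sup_eq_bot_iff, Ideal.span_singleton_eq_bot, Ideal.span_singleton_eq_bot] at h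
    exact not_isUnit_zero (hab (dvd_of_eq h.1.symm) (dvd_of_eq h.2.symm))
  obtain ⟨P, hP, hle⟩ := hs.exists_isMaxStarIdeal_ge hne htop
  rw [sup_le_iff, P.span_singleton_le_iff_mem, P.span_singleton_le_iff_mem] at hle
  have := hP.isPrime
  obtain ⟨t, ht, hdvd | hdvd⟩ := (valuationRing_atPrime_iff_forall_exists_dvd_mul P).1 (hV P hP) a b
  · exact ht (P.mem_of_dvd (hab.dvd_of_dvd_mul_left hdvd) hle.1)
  · exact ht (P.mem_of_dvd (hab.symm.dvd_of_dvd_mul_left hdvd) hle.2)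

theorem isStarBezout_of_isGCDMonoid [IsGCDMonoid D] (hs : s.FiniteCharacter)
    (hV : ∀ (P : Ideal D) [P.IsPrime], s.IsMaxStarIdeal P →
      ValuationRing (Localization.AtPrime P)) : s.IsStarBezout := by
  rw [isStarBezout_iff_closure_span_sup_span]
  intro a b
  obtain ⟨_⟩ := ‹IsGCDMonoid D›
  obtain ⟨a', b', ha, hb, hab⟩ := extract_gcd a b
  refine ⟨gcd a b, ?_⟩
  calc s.closure (Ideal.span {a} ⊔ Ideal.span {b})
      = s.closure (Ideal.span {gcd a b} * (Ideal.span {a'} ⊔ Ideal.span {b'})) := by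
        rw [Ideal.mul_sup, Ideal.span_singleton_mul_span_singleton,
          Ideal.span_singleton_mul_span_singleton, ← ha, ← hb]
    _ = Ideal.span {gcd a b} := by
        rw [closure_span_singleton_mul, closure_sup_eq_top_of_isRelPrime hs hV
          (gcd_isUnit_iff_isRelPrime.1 hab), Ideal.mul_top]

theorem IsStarBezout.isFHomog (h : s.IsStarBezout) (hI : s.IsHomog I) : s.IsFHomog I := by
  refine ⟨hI, fun J _ hJ _ => ?_⟩
  obtain ⟨J₀, -, hfg, rfl⟩ := isFiniteTypeStarIdeal_iff.1 hJ
  exact h J₀ hfg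

theorem exists_multiset_isHomog_prod_eq [DecompositionMonoid D] (hs : s.FiniteCharacter)
    (hF : s.FiniteStarCharacter) (hN : s.StarIndependent) {x : D} (hx : x ≠ 0)
    (hu : ¬IsUnit x) :
    ∃ S : Multiset D, (∀ y ∈ S, s.IsHomog (Ideal.span {y})) ∧ S.prod = x := by
  induction hn : {P : Ideal D | s.IsMaxStarIdeal P ∧ x ∈ P}.ncard using Nat.strong_induction_on
    generalizing x with
  | _ n ih =>
  obtain ⟨P, hP, hxP⟩ := hs.exists_isMaxStarIdeal_mem hx hu
  by_cases huniq : ∀ Q : Ideal D, s.IsMaxStarIdeal Q → x ∈ Q → Q = P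
  · refine ⟨{x}, fun y hy => ?_, Multiset.prod_singleton x⟩
    rw [Multiset.mem_singleton.1 hy, hs.isHomog_iff]
    simp only [Ideal.span_singleton_le_iff_mem]
    exact ⟨isFiniteTypeStarIdeal_span_singleton hx, P, ⟨hP, hxP⟩, fun Q hQ => huniq Q hQ.1 hQ.2⟩
  push Not at huniq
  obtain ⟨Q, hQ, hxQ, hQP⟩ := huniq
  have := hP.isPrime
  have := hQ.isPrime
  obtain ⟨a, b, haP, hbQ, rfl⟩ := exists_eq_mul_notMem_notMem (P := P) (Q := Q)
    fun L hL hxL => hN P Q hP hQ hQP.symm L hL ((Submodule.ne_bot_iff L).2 ⟨x, hxL, hx⟩)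
  have exists_multiset {y : D} {R : Ideal D} (hdvd : y ∣ a * b) (hR : s.IsMaxStarIdeal R)
      (hmem : a * b ∈ R) (hyR : y ∉ R) (hyu : ¬IsUnit y) :
      ∃ S : Multiset D, (∀ y ∈ S, s.IsHomog (Ideal.span {y})) ∧ S.prod = y := by
    refine ih _ (hn ▸ Set.ncard_lt_ncard ?_ (hF _ hx hu)) (ne_zero_of_dvd_ne_zero hx hdvd) hyu rfl
    exact ⟨fun P' hP' => ⟨hP'.1, P'.mem_of_dvd hdvd hP'.2⟩, fun h => hyR (h ⟨hR, hmem⟩).2⟩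
  have hau : ¬IsUnit a := fun h => hbQ ((Ideal.unit_mul_mem_iff_mem Q h).1 hxQ)
  have hbu : ¬IsUnit b := fun h => haP ((Ideal.mul_unit_mem_iff_mem P h).1 hxP)
  obtain ⟨S, hS, hSa⟩ := exists_multiset (dvd_mul_right a b) hP hxP haP hau
  obtain ⟨T, hT, hTb⟩ := exists_multiset (dvd_mul_left b a) hQ hxQ hbQ hbu
  refine ⟨S + T, fun y hy => ?_, by rw [Multiset.prod_add, hSa, hTb]⟩
  exact (Multiset.mem_add.1 hy).elim (hS y) (hT y)

theorem IsStarBezout.isFSHDomain (h : s.IsStarBezout) (hs : s.FiniteCharacter)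
    (hF : s.FiniteStarCharacter) (hN : s.StarIndependent) : s.IsFSHDomain := by
  intro x hx hu
  have := h.isGCDMonoid
  obtain ⟨S, hS, rfl⟩ := exists_multiset_isHomog_prod_eq hs hF hN hx hu
  refine ⟨S.map fun y => Ideal.span {y}, fun J hJ => ?_, ?_⟩
  · obtain ⟨y, hy, rfl⟩ := Multiset.mem_map.1 hJ
    exact h.isFHomog (hS y hy)
  · rw [Ideal.multiset_prod_span_singleton,
      star_coeIdeal_eq_coeIdeal_iff (mt Ideal.span_singleton_eq_bot.1 hx)]
    exact (isClosed_span_singleton _).closure_eq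

end StarOperation

/-- For every nonzero nonunit `x` of `D`, `xD` is a `*`-product of finitely
many `*`-f-homogeneous ideals iff `D` is a GCD domain and a `*`-IRKT. -/
theorem fSH_iff_GCD_IRKT {D K : Type*} [CommRing D] [IsDomain D] [Field K]
    [Algebra D K] [IsFractionRing D K] (s : StarOperation D K) (hs : s.FiniteCharacter) :
    (∀ x : D, x ≠ 0 → ¬IsUnit x →
      ∃ T : Multiset (Ideal D), (∀ J ∈ T, s.IsFHomog J) ∧
        s.star ((T.prod : Ideal D) : FractionalIdeal D⁰ K) =
          ((Ideal.span {x} : Ideal D) : FractionalIdeal D⁰ K)) ↔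
    ((∀ a b : D, a ≠ 0 → b ≠ 0 →
        (Ideal.span {a} ⊓ Ideal.span {b} : Ideal D).IsPrincipal) ∧
      s.IsIRKT) := by
  constructor
  · intro h
    have hB := StarOperation.IsFSHDomain.isStarBezout h
    have hSH := StarOperation.IsFSHDomain.isSHDomain h
    exact ⟨isGCDMonoid_iff_forall_inf_isPrincipal.1 hB.isGCDMonoid,
      fun _ _ => hB.valuationRing_atPrime, fun _ => hs.exists_algebraMap_eq,
      hSH.finiteStarCharacter hs, hSH.starIndependent hs⟩
  · rintro ⟨hG, hV, -, hF, hN⟩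
    have := isGCDMonoid_iff_forall_inf_isPrincipal.2 hG
    exact (StarOperation.isStarBezout_of_isGCDMonoid hs hV).isFSHDomain hs hF hN
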